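/- Let p be a prime with p \equiv 1 (mod 4), and write p = a^2 + b^2 with integers a, b and a \equiv 1 (mod 4). Then \sum_{k=0}^{(p-1)/2} \binom{2k}{k}^2 / 8^k \equiv \sum_{k=0}^{(p-1)/2} \binom{2k}{k}^2 / (-16)^k \equiv (-1)^{(p-1)/4} (2a - p/(2a)) \pmod{p^2}. -/

import Mathlib

open Finset Polynomial

/-- `a ≡ b (mod p^k)` as rationals: `a - b` is `p^k` times a `p`-integral rational. -/
def ratCongr (p k : ℕ) (a b : ℚ) : Prop :=
  ∃ c : ℚ, a - b = (p : ℚ) ^ k * c ∧ ¬ (p ∣ c.den)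

/-- The Legendre polynomial `P n`, defined via Rodrigues' formula. -/
noncomputable def legendre (n : ℕ) : Polynomial ℚ :=
  ((2 ^ n * n.factorial : ℚ)⁻¹) • ((fun q => Polynomial.derivative q)^[n] ((X ^ 2 - 1) ^ n))

/-- The Legendre symbol of a `p`-integral rational `x` modulo `p`
(for `x = m/n` it is `(mn/p)`, the symbol of the residue of `x` mod `p`). -/
def ratLegendreSym (p : ℕ) [Fact p.Prime] (x : ℚ) : ℤ :=
  legendreSym p (x.num * x.den)

/-!
Let `p = 4 m + 1`, `n = 2 m`, and let `D` be the central Delannoy number of index `n`. Modulo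
`p ^ 2` one has `(2k choose k) ^ 2 ≡ (-16) ^ k (n choose k) (n + k choose k)`, so the sum with
`-16` is congruent to `D`, and the sum with `8` to the shifted Legendre polynomial at `2`; the
symmetry `x ↦ 1 - x` of that polynomial makes this `D` again.

To evaluate `D`, a second-difference argument expresses it modulo `p ^ 2` through `(2m choose m)`
and `(6m + 1 choose m)`. The same combination comes out of expanding the Jacobi sum of the
quadratic character with the `3m`-th power of the Teichmüller character modulo `p ^ 2`, and so
`-D` is the image of a Jacobi sum `z` in `ℤ[i]`. Now `z` has norm `p`, and a congruence modulo
`2 (1 + i)` fixes its real part as `-(-1) ^ m a`. Hence `D` is a root of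
`X ^ 2 - 2 (-1) ^ m a X + p` modulo `p ^ 2`; being prime to `p`, it is the root congruent to
`2 (-1) ^ m a - p / (2 (-1) ^ m a)`.
-/

section Combinatorics

/-- The central Delannoy number `D n = ∑ₖ (n choose k) (n + k choose k)`, the value at `3` of the
`n`-th Legendre polynomial. Both sums of the theorem are congruent to it modulo `p ^ 2`. -/
def centralDelannoy (n : ℕ) : ℕ :=
  ∑ k ∈ range (n + 1), n.choose k * (n + k).choose k

/-- The evaluations of the shifted Legendre polynomial at `-1` and `2` agree up to sign. -/
theorem sum_choose_mul_choose_mul_neg_two_pow (n : ℕ) :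
    ∑ k ∈ range (n + 1), (n.choose k : ℤ) * (n + k).choose k * (-2) ^ k =
      (-1) ^ n * centralDelannoy n := by
  have aeval_eq (x : ℤ) : aeval x (shiftedLegendre n) =
      ∑ k ∈ range (n + 1), (n.choose k : ℤ) * (n + k).choose k * (-x) ^ k := by
    rw [aeval_def, eval₂_eq_sum_range' _ (by rw [natDegree_shiftedLegendre]; exact n.lt_succ_self)]
    refine sum_congr rfl fun k _ => ?_
    rw [coeff_shiftedLegendre, Nat.choose_symm_add, neg_pow x]
    simp only [Int.cast_id, algebraMap_int_eq, eq_intCast]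
    ring
  have symm := shiftedLegendre_eval_symm n (2 : ℤ)
  rw [aeval_eq, show (1 : ℤ) - 2 = -1 by norm_num, aeval_eq] at symm
  simpa [centralDelannoy] using symm

/-- Compare the coefficients of `X ^ (2 * m)` in `(1 - X) ^ N * (1 + X) ^ N = (1 - X ^ 2) ^ N`. -/
theorem sum_neg_one_pow_mul_choose_mul_choose {R : Type*} [CommRing R] (N m : ℕ) :
    ∑ k ∈ range (2 * m + 1), (-1 : R) ^ k * N.choose k * N.choose (2 * m - k) =
      (-1) ^ m * N.choose m := by
  have coeff_one_sub (k : ℕ) : ((1 - X : R[X]) ^ N).coeff k = (-1) ^ k * N.choose k := by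
    have := comp_C_mul_X_coeff (p := (1 + X : R[X]) ^ N) (r := -1) (n := k)
    rw [coeff_one_add_X_pow] at this
    simpa [sub_eq_add_neg, mul_comm] using this
  have factor : (1 - X : R[X]) ^ N * (1 + X) ^ N = expand R 2 ((1 - X) ^ N) := by
    rw [← mul_pow]
    simp only [map_pow, map_sub, map_one, expand_X]
    ring
  have := congr_arg (fun f => coeff f (2 * m)) factor
  simpa only [coeff_mul, Finset.Nat.sum_antidiagonal_eq_sum_range_succ_mk, coeff_one_sub,
    coeff_one_add_X_pow, mul_comm 2 m, coeff_expand_mul two_pos] using this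

end Combinatorics

section ModSq

variable {p : ℕ}

/-- Reduction modulo `p` of residues modulo `p ^ 2`. -/
def redModSq (p : ℕ) : ZMod (p ^ 2) →+* ZMod p :=
  ZMod.castHom (dvd_pow_self p two_ne_zero) (ZMod p)

theorem natCast_self_sq (p : ℕ) : (p : ZMod (p ^ 2)) ^ 2 = 0 := by
  rw [← Nat.cast_pow, ZMod.natCast_self]

theorem natCast_dvd_of_redModSq_eq_zero {u : ZMod (p ^ 2)} (hu : redModSq p u = 0) :
    (p : ZMod (p ^ 2)) ∣ u := by
  obtain ⟨x, rfl⟩ := ZMod.intCast_surjective u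
  rw [map_intCast, ZMod.intCast_zmod_eq_zero_iff_dvd] at hu
  simpa using map_dvd (Int.castRingHom (ZMod (p ^ 2))) hu

theorem mul_eq_zero_of_redModSq_eq_zero {u v : ZMod (p ^ 2)} (hu : redModSq p u = 0)
    (hv : redModSq p v = 0) : u * v = 0 := by
  have := mul_dvd_mul (natCast_dvd_of_redModSq_eq_zero hu) (natCast_dvd_of_redModSq_eq_zero hv)
  rwa [← sq, natCast_self_sq, zero_dvd_iff] at this

theorem natCast_mul_eq_of_redModSq_eq {u v : ZMod (p ^ 2)} (h : redModSq p u = redModSq p v) :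
    (p : ZMod (p ^ 2)) * u = p * v := by
  rw [← sub_eq_zero, ← mul_sub]
  exact mul_eq_zero_of_redModSq_eq_zero (by simp) (by rw [map_sub, h, sub_self])

theorem pow_eq_pow_of_redModSq_eq {u v : ZMod (p ^ 2)} (h : redModSq p u = redModSq p v) :
    u ^ p = v ^ p := by
  have hdvd := natCast_dvd_of_redModSq_eq_zero (u := u - v) (by rw [map_sub, h, sub_self])
  simpa [natCast_self_sq, sub_eq_zero] using dvd_sub_pow_of_dvd_sub hdvd 1

theorem isUnit_of_redModSq_ne_zero [hp : Fact p.Prime] {u : ZMod (p ^ 2)}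
    (hu : redModSq p u ≠ 0) : IsUnit u := by
  obtain ⟨x, rfl⟩ := ZMod.natCast_zmod_surjective u
  rw [map_natCast, Ne, ZMod.natCast_eq_zero_iff] at hu
  rw [ZMod.isUnit_iff_coprime]
  exact ((hp.out.coprime_iff_not_dvd.2 hu).symm).pow_right 2

theorem isUnit_natCast_of_coprime {k n : ℕ} (h : k.Coprime p) : IsUnit (k : ZMod (p ^ n)) :=
  (ZMod.isUnit_iff_coprime k (p ^ n)).2 (h.pow_right n)

end ModSq

section BinomialCongruences

variable {p : ℕ}

theorem natCast_choose_add_self [Fact p.Prime] (n : ℕ) {k : ℕ} (hk : k < p) :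
    ((n + p).choose k : ZMod p) = n.choose k := by
  have lucas (N : ℕ) : (N.choose k : ZMod p) = ((N % p).choose k : ℕ) := by
    simpa [Nat.mod_eq_of_lt hk, Nat.div_eq_of_lt hk] using (ZMod.natCast_eq_natCast_iff _ _ _).2
      (Choose.choose_modEq_choose_mod_mul_choose_div_nat (p := p) (n := N) (k := k))
  rw [lucas (n + p), lucas n, Nat.add_mod_right]

theorem eval_add_add_eval_sub {R : Type*} [CommRing R] (f : R[X]) (x : R) {e : R}
    (he : e ^ 2 = 0) : f.eval (x + e) + f.eval (x - e) = 2 * f.eval x := by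
  obtain ⟨c, hc⟩ := f.binomExpansion x e
  obtain ⟨d, hd⟩ := f.binomExpansion x (-e)
  rw [sub_eq_add_neg, hc, hd]
  linear_combination (c + d) * he

/-- A vanishing second difference: up to the factor `k !`, the three binomials are the values of the
`k`-th falling factorial at `N + p`, `N - p = -(M + 1)` and `N`. -/
theorem choose_add_self_add_neg_one_pow_mul_choose [hp : Fact p.Prime] {N M k : ℕ}
    (hNM : N + M + 1 = p) (hk : k < p) :
    ((N + p).choose k : ZMod (p ^ 2)) + (-1) ^ k * (M + k).choose k = 2 * N.choose k := by
  have eval_nat (n : ℕ) : (descPochhammer (ZMod (p ^ 2)) k).eval (n : ZMod (p ^ 2)) =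
      k.factorial * n.choose k := by
    rw [descPochhammer_eval_eq_descFactorial, Nat.descFactorial_eq_factorial_mul_choose,
      Nat.cast_mul]
  have eval_neg : (descPochhammer (ZMod (p ^ 2)) k).eval ((N : ZMod (p ^ 2)) - p) =
      k.factorial * ((-1) ^ k * (M + k).choose k) := by
    have hx : (N : ZMod (p ^ 2)) - p = -((M + 1 : ℕ) : ZMod (p ^ 2)) := by
      rw [← hNM]; push_cast; ring
    have := ascPochhammer_eval_neg_eq_descPochhammer _ (-((M + 1 : ℕ) : ZMod (p ^ 2))) k
    rw [neg_neg, ascPochhammer_nat_eq_natCast_ascFactorial,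
      Nat.ascFactorial_eq_factorial_mul_choose, Nat.cast_mul] at this
    rw [hx, mul_left_comm, this, ← mul_assoc, ← mul_pow, neg_one_mul, neg_neg, one_pow, one_mul]
  have hfact : IsUnit (k.factorial : ZMod (p ^ 2)) :=
    isUnit_natCast_of_coprime (Nat.coprime_comm.1 (hp.out.coprime_factorial_of_lt hk))
  have diff := eval_add_add_eval_sub (descPochhammer _ k) (N : ZMod (p ^ 2)) (natCast_self_sq p)
  rw [eval_neg, ← Nat.cast_add, eval_nat, eval_nat] at diff
  exact hfact.mul_left_cancel (by linear_combination diff)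

theorem sum_neg_one_pow_mul_mul_comm {R : Type*} [CommRing R] (f g : ℕ → R) (m : ℕ) :
    ∑ k ∈ range (2 * m + 1), (-1) ^ k * f k * g (2 * m - k) =
      ∑ k ∈ range (2 * m + 1), (-1) ^ k * g k * f (2 * m - k) := by
  rw [← sum_range_reflect]
  refine sum_congr rfl fun k hk => ?_
  have hk : k ≤ 2 * m := Nat.lt_succ_iff.1 (mem_range.1 hk)
  have sign : (-1 : R) ^ (2 * m - k) = (-1) ^ k :=
    neg_one_pow_congr (by rw [Nat.even_sub hk]; simp)
  rw [Nat.add_sub_cancel, Nat.sub_sub_self hk, sign]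
  ring

/-- Each difference `(N + p choose k) - (N choose k)` is divisible by `p`, so a convolution of two
of them vanishes modulo `p ^ 2`. -/
theorem two_mul_sum_neg_one_pow_mul_choose_add_self_mul_choose [Fact p.Prime] (N : ℕ) {m : ℕ}
    (hm : 2 * m < p) :
    2 * ∑ k ∈ range (2 * m + 1),
        (-1 : ZMod (p ^ 2)) ^ k * (N + p).choose k * N.choose (2 * m - k) =
      (-1) ^ m * (N.choose m + (N + p).choose m) := by
  set A : ℕ → ZMod (p ^ 2) := fun k => N.choose k
  set B : ℕ → ZMod (p ^ 2) := fun k => (N + p).choose k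
  have conv_A : ∑ k ∈ range (2 * m + 1), (-1) ^ k * A k * A (2 * m - k) = (-1) ^ m * A m :=
    sum_neg_one_pow_mul_choose_mul_choose N m
  have conv_B : ∑ k ∈ range (2 * m + 1), (-1) ^ k * B k * B (2 * m - k) = (-1) ^ m * B m :=
    sum_neg_one_pow_mul_choose_mul_choose (N + p) m
  have conv_diff : ∑ k ∈ range (2 * m + 1),
      (-1) ^ k * ((B k - A k) * (B (2 * m - k) - A (2 * m - k))) = 0 := by
    have red_diff {k : ℕ} (hk : k ≤ 2 * m) : redModSq p (B k - A k) = 0 := by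
      rw [map_sub, map_natCast, map_natCast, natCast_choose_add_self _ (by lia), sub_self]
    refine sum_eq_zero fun k hk => ?_
    rw [mul_eq_zero_of_redModSq_eq_zero (red_diff (Nat.lt_succ_iff.1 (mem_range.1 hk)))
      (red_diff (Nat.sub_le _ _)), mul_zero]
  simp only [mul_sub, sub_mul, sum_sub_distrib, ← mul_assoc] at conv_diff
  linear_combination conv_A + conv_B - conv_diff - sum_neg_one_pow_mul_mul_comm A B m

theorem two_mul_centralDelannoy [Fact p.Prime] {m : ℕ} (hm : p = 4 * m + 1) :
    2 * (centralDelannoy (2 * m) : ZMod (p ^ 2)) =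
      (-1) ^ m * (3 * (2 * m).choose m - (6 * m + 1).choose m) := by
  have term {k : ℕ} (hk : k ∈ range (2 * m + 1)) :
      (((2 * m).choose k * (2 * m + k).choose k : ℕ) : ZMod (p ^ 2)) =
        2 * ((-1) ^ k * (2 * m).choose k * (2 * m).choose (2 * m - k)) -
          (-1) ^ k * (2 * m + p).choose k * (2 * m).choose (2 * m - k) := by
    have hk : k ≤ 2 * m := Nat.lt_succ_iff.1 (mem_range.1 hk)
    have second_diff := choose_add_self_add_neg_one_pow_mul_choose (N := 2 * m) (M := 2 * m)
      (by lia : 2 * m + 2 * m + 1 = p) (by lia : k < p)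
    have sign : (-1 : ZMod (p ^ 2)) ^ k * (-1) ^ k = 1 := by rw [← mul_pow]; simp
    rw [Nat.choose_symm hk, Nat.cast_mul]
    linear_combination (-1) ^ k * ((2 * m).choose k : ZMod (p ^ 2)) * second_diff
      - ((2 * m).choose k : ZMod (p ^ 2)) * (2 * m + k).choose k * sign
  have cross := two_mul_sum_neg_one_pow_mul_choose_add_self_mul_choose (p := p) (2 * m)
    (by lia : 2 * m < p)
  rw [centralDelannoy, Nat.cast_sum, sum_congr rfl fun k hk => term hk, sum_sub_distrib,
    ← mul_sum, sum_neg_one_pow_mul_choose_mul_choose, mul_sub, cross,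
    show 2 * m + p = 6 * m + 1 by lia]
  ring

theorem two_mul_choose_six_mul {m : ℕ} (hm : p = 4 * m + 1) :
    2 * ((6 * m).choose m : ZMod (p ^ 2)) = (1 - 2 * p) * (6 * m + 1).choose m := by
  have pascal := congr_arg (Nat.cast (R := ZMod (p ^ 2))) (Nat.choose_mul_succ_eq (6 * m) m)
  rw [show 6 * m + 1 - m = 5 * m + 1 by lia] at pascal
  have cast_p : (p : ZMod (p ^ 2)) = 4 * m + 1 := by exact_mod_cast congr_arg Nat.cast hm
  push_cast at pascal
  have upper : (4 : ZMod (p ^ 2)) * (6 * m + 1) = 6 * p - 2 := by rw [cast_p]; ring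
  have lower : (4 : ZMod (p ^ 2)) * (5 * m + 1) = 5 * p - 1 := by rw [cast_p]; ring
  linear_combination -4 * (1 + 3 * (p : ZMod (p ^ 2))) * pascal
    + (1 + 3 * p) * ((6 * m).choose m : ZMod (p ^ 2)) * upper
    - (1 + 3 * p) * ((6 * m + 1).choose m : ZMod (p ^ 2)) * lower
    + (18 * ((6 * m).choose m : ZMod (p ^ 2)) - 15 * (6 * m + 1).choose m) * natCast_self_sq p

theorem natCast_choose_six_mul_add_one [Fact p.Prime] {m : ℕ} (hm : p = 4 * m + 1) :
    ((6 * m + 1).choose m : ZMod p) = (2 * m).choose m := by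
  rw [← natCast_choose_add_self (2 * m) (by lia : m < p), show 2 * m + p = 6 * m + 1 by lia]

theorem natCast_mul_choose_six_mul_add_one [Fact p.Prime] {m : ℕ} (hm : p = 4 * m + 1) :
    (p : ZMod (p ^ 2)) * (6 * m + 1).choose m = p * (2 * m).choose m :=
  natCast_mul_eq_of_redModSq_eq <| by
    rw [map_natCast, map_natCast, natCast_choose_six_mul_add_one hm]

/-- `4 * (n - k) * (n + k + 1) = p ^ 2 - (2 * k + 1) ^ 2` makes both sides satisfy the same
first-order recurrence. -/
theorem centralBinom_eq_neg_sixteen_pow_mul_choose [hp : Fact p.Prime] {n k : ℕ}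
    (hn : p = 2 * n + 1) (hk : k ≤ n) :
    (k.centralBinom : ZMod (p ^ 2)) = (-16) ^ k * (n + k).choose (2 * k) := by
  induction k with
  | zero => simp
  | succ k ih =>
    have central := Nat.succ_mul_centralBinom_succ k
    have pascal_lower := Nat.add_one_mul_choose_eq (n + k) (2 * k + 1)
    have pascal_upper := Nat.choose_succ_right_eq (n + k) (2 * k)
    rw [show n + k - 2 * k = n - k by lia] at pascal_upper
    apply_fun (Nat.cast : ℕ → ZMod (p ^ 2)) at central pascal_lower pascal_upper
    push_cast [show k ≤ n by lia] at central pascal_lower pascal_upper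
    have cast_p : (p : ZMod (p ^ 2)) = 2 * n + 1 := by exact_mod_cast congr_arg Nat.cast hn
    have unit : IsUnit (((k + 1) * (2 * k + 1) : ℕ) : ZMod (p ^ 2)) :=
      isUnit_natCast_of_coprime <| .mul_left
        (Nat.coprime_of_lt_prime (by lia) (by lia) hp.out).symm
        (Nat.coprime_of_lt_prime (by lia) (by lia) hp.out).symm
    apply unit.mul_left_cancel
    rw [show n + (k + 1) = n + k + 1 by ring, show 2 * (k + 1) = 2 * k + 1 + 1 by ring]
    push_cast
    linear_combination (2 * k + 1 : ZMod (p ^ 2)) * central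
      + 2 * (2 * k + 1 : ZMod (p ^ 2)) ^ 2 * ih (by lia) + 8 * (-16) ^ k *
        ((n + k + 1) * pascal_upper - (2 * k + 1) * pascal_lower)
      + 2 * (-16) ^ k * ((n + k).choose (2 * k) : ZMod (p ^ 2)) *
        (natCast_self_sq p - (p + (2 * n + 1)) * cast_p)

theorem choose_two_mul_mul_centralBinom (n k : ℕ) :
    (n + k).choose (2 * k) * k.centralBinom = n.choose k * (n + k).choose k := by
  have := Nat.choose_mul (n := n + k) (k := 2 * k) (s := k) (by lia)
  rwa [Nat.add_sub_cancel, show 2 * k - k = k by lia, mul_comm (Nat.choose _ k)] at this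

theorem centralBinom_sq_eq [Fact p.Prime] {n k : ℕ} (hn : p = 2 * n + 1) (hk : k ≤ n) :
    (k.centralBinom : ZMod (p ^ 2)) ^ 2 = (-16) ^ k * (n.choose k * (n + k).choose k) := by
  rw [← Nat.cast_mul, ← choose_two_mul_mul_centralBinom, Nat.cast_mul,
    sq (k.centralBinom : ZMod (p ^ 2)), ← mul_assoc,
    ← centralBinom_eq_neg_sixteen_pow_mul_choose hn hk]

end BinomialCongruences

section QuadraticCharacter

variable (F : Type*) [Field F] [Fintype F] [DecidableEq F] {R S : Type*} [CommRing R] [CommRing S]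

variable (R) in
/-- The quadratic character of `F` with values in `R`. -/
def quadraticCharTo : MulChar F R :=
  (quadraticChar F).ringHomComp (Int.castRingHom R)

@[simp]
theorem quadraticCharTo_apply (t : F) : quadraticCharTo F R t = (quadraticChar F t : R) :=
  rfl

theorem quadraticCharTo_ne_one [CharZero R] (hF : ringChar F ≠ 2) : quadraticCharTo F R ≠ 1 :=
  (MulChar.ringHomComp_ne_one_iff Int.cast_injective).2 (quadraticChar_ne_one hF)

theorem quadraticCharTo_sq : quadraticCharTo F R ^ 2 = 1 :=
  ((quadraticChar_isQuadratic F).comp _).sq_eq_one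

theorem ringHomComp_quadraticCharTo (φ : R →+* S) :
    (quadraticCharTo F R).ringHomComp φ = quadraticCharTo F S := by
  ext t
  simp

end QuadraticCharacter

section Teichmuller

variable {p : ℕ} [Fact p.Prime]

@[simp]
theorem redModSq_natCast_val (t : ZMod p) : redModSq p (t.val : ZMod (p ^ 2)) = t := by
  rw [map_natCast, ZMod.natCast_zmod_val]

/-- The Teichmüller lift modulo `p ^ 2`: the multiplicative character `t ↦ t ^ p` splitting
reduction modulo `p`, where the power is that of any lift of `t`. -/
noncomputable def teichmullerModSq (p : ℕ) [hp : Fact p.Prime] :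
    MulChar (ZMod p) (ZMod (p ^ 2)) where
  toFun t := (t.val : ZMod (p ^ 2)) ^ p
  map_one' := (pow_eq_pow_of_redModSq_eq (v := 1) (by simp)).trans (one_pow p)
  map_mul' s t := by
    rw [← mul_pow]
    exact pow_eq_pow_of_redModSq_eq (by simp)
  map_nonunit' t ht := by
    rw [not_ne_iff.1 (mt isUnit_iff_ne_zero.2 ht), ZMod.val_zero, Nat.cast_zero,
      zero_pow hp.out.ne_zero]

theorem teichmullerModSq_redModSq (u : ZMod (p ^ 2)) :
    teichmullerModSq p (redModSq p u) = u ^ p :=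
  pow_eq_pow_of_redModSq_eq (redModSq_natCast_val _)

@[simp]
theorem redModSq_teichmullerModSq (t : ZMod p) : redModSq p (teichmullerModSq p t) = t := by
  change redModSq p ((t.val : ZMod (p ^ 2)) ^ p) = t
  rw [map_pow, redModSq_natCast_val, ZMod.pow_card]

theorem teichmullerModSq_neg_one (hp : Odd p) : teichmullerModSq p (-1) = -1 := by
  simpa [hp.neg_one_pow] using teichmullerModSq_redModSq (-1 : ZMod (p ^ 2))

theorem sum_teichmullerModSq_pow {N : ℕ} (hN : 0 < N) :
    ∑ t, teichmullerModSq p t ^ N = if p - 1 ∣ N then (p : ZMod (p ^ 2)) - 1 else 0 := by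
  split_ifs with hdvd
  · have term (t : ZMod p) : teichmullerModSq p t ^ N = if t = 0 then 0 else 1 := by
      obtain ⟨c, rfl⟩ := hdvd
      split_ifs with ht
      · rw [ht, MulChar.map_zero, zero_pow hN.ne']
      · rw [pow_mul, ← map_pow, ZMod.pow_card_sub_one_eq_one ht, map_one, one_pow]
    simp only [term, sum_ite, sum_const_zero, zero_add, sum_const, nsmul_one]
    rw [filter_ne', card_erase_of_mem (mem_univ _), card_univ, ZMod.card,
      Nat.cast_pred (Fact.out : p.Prime).pos]
  · obtain ⟨g, hg⟩ := IsCyclic.exists_generator (α := (ZMod p)ˣ)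
    have g_pow_ne : (g : ZMod p) ^ N ≠ 1 := by
      rw [← Units.val_pow_eq_pow_val, Ne, Units.val_eq_one, ← orderOf_dvd_iff_pow_eq_one,
        orderOf_eq_card_of_forall_mem_zpowers hg, Nat.card_eq_fintype_card, ZMod.card_units]
      exact hdvd
    have shift : ∑ t, teichmullerModSq p t ^ N =
        teichmullerModSq p g ^ N * ∑ t, teichmullerModSq p t ^ N := by
      rw [mul_sum, ← Equiv.sum_comp (Units.mulLeft g)]
      simp [mul_pow]
    have unit : IsUnit (teichmullerModSq p g ^ N - 1) := by
      apply isUnit_of_redModSq_ne_zero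
      rwa [map_sub, map_pow, redModSq_teichmullerModSq, map_one, sub_ne_zero]
    exact unit.mul_right_eq_zero.1 (by linear_combination -shift)

theorem sum_teichmullerModSq_pow_mul_one_sub_pow {a : ℕ} (ha : 0 < a) (M : ℕ) :
    ∑ t, teichmullerModSq p t ^ a * (1 - teichmullerModSq p t) ^ M =
      (p - 1) * ∑ k ∈ range (M + 1) with p - 1 ∣ a + k, (-1) ^ k * (M.choose k : ZMod (p ^ 2)) := by
  have expand (T : ZMod (p ^ 2)) : T ^ a * (1 - T) ^ M =
      ∑ k ∈ range (M + 1), (-1) ^ k * (M.choose k : ZMod (p ^ 2)) * T ^ (a + k) := by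
    rw [sub_eq_neg_add, add_pow, mul_sum]
    refine sum_congr rfl fun k _ => ?_
    rw [neg_pow, pow_add]
    ring
  simp only [expand]
  rw [sum_comm, mul_sum, sum_filter]
  refine sum_congr rfl fun k _ => ?_
  rw [← mul_sum, sum_teichmullerModSq_pow (by lia)]
  split_ifs <;> ring

theorem filter_four_mul_dvd_three_mul_add {m : ℕ} (hm : 0 < m) :
    {k ∈ range (6 * m + 1) | 4 * m ∣ 3 * m + k} = {m, 5 * m} := by
  ext k
  simp only [mem_filter, mem_range, mem_insert, mem_singleton]
  constructor
  · rintro ⟨hk, c, hc⟩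
    have : c < 3 := lt_of_mul_lt_mul_left (by lia : 4 * m * c < 4 * m * 3) (Nat.zero_le _)
    interval_cases c <;> lia
  · rintro (rfl | rfl)
    · exact ⟨by lia, 1, by ring⟩
    · exact ⟨by lia, 2, by ring⟩

theorem sum_teichmullerModSq_pow_mul_one_sub_pow_two_mul {m : ℕ} (hm : p = 4 * m + 1) :
    ∑ t, teichmullerModSq p t ^ (3 * m) * (1 - teichmullerModSq p t) ^ (2 * m) =
      (p - 1) * ((-1) ^ m * (2 * m).choose m) := by
  have hm0 : 0 < m := by have := (Fact.out : p.Prime).two_le; lia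
  have filter_eq : {k ∈ range (2 * m + 1) | p - 1 ∣ 3 * m + k} = {m} := by
    ext k
    have := Finset.ext_iff.1 (filter_four_mul_dvd_three_mul_add hm0) k
    simp only [mem_filter, mem_range, mem_insert, mem_singleton] at this ⊢
    rw [show p - 1 = 4 * m by lia]
    lia
  rw [sum_teichmullerModSq_pow_mul_one_sub_pow (by lia), filter_eq, sum_singleton]

theorem sum_teichmullerModSq_pow_mul_one_sub_pow_six_mul {m : ℕ} (hm : p = 4 * m + 1) :
    ∑ t, teichmullerModSq p t ^ (3 * m) * (1 - teichmullerModSq p t) ^ (6 * m) =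
      (p - 1) * ((-1) ^ m * (2 * (6 * m).choose m)) := by
  have hm0 : 0 < m := by have := (Fact.out : p.Prime).two_le; lia
  have choose_symm : (6 * m).choose (5 * m) = (6 * m).choose m :=
    Nat.choose_symm_of_eq_add (by ring)
  have sign : (-1 : ZMod (p ^ 2)) ^ (5 * m) = (-1) ^ m := by
    rw [pow_mul]; norm_num
  rw [sum_teichmullerModSq_pow_mul_one_sub_pow (by lia), show p - 1 = 4 * m by lia,
    filter_four_mul_dvd_three_mul_add hm0, sum_pair (by lia), choose_symm, sign]
  ring

/-- If `u ^ n = ε + e` with `ε = ± 1` and `e ^ 2 = 0`, then `3 u ^ n - u ^ (3 n) = 2 ε`: the cubic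
`3 x - x ^ 3` is stationary at `± 1`. -/
theorem two_mul_quadraticChar_redModSq {n : ℕ} (hn : p = 2 * n + 1) (hn2 : 2 ≤ n)
    (u : ZMod (p ^ 2)) :
    2 * (quadraticChar (ZMod p) (redModSq p u) : ZMod (p ^ 2)) = 3 * u ^ n - u ^ (3 * n) := by
  by_cases hu : redModSq p u = 0
  · have pow_eq_zero {k : ℕ} (hk : 2 ≤ k) : u ^ k = 0 :=
      pow_eq_zero_of_le hk ((sq u).trans (mul_eq_zero_of_redModSq_eq_zero hu hu))
    simp [hu, pow_eq_zero hn2, pow_eq_zero (by lia : 2 ≤ 3 * n)]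
  · set ε : ZMod (p ^ 2) := (quadraticChar (ZMod p) (redModSq p u) : ZMod (p ^ 2)) with hε
    have euler : redModSq p (u ^ n - ε) = 0 := by
      rw [map_sub, map_pow, hε, map_intCast, quadraticChar_eq_pow_of_char_ne_two'
        (by rw [ZMod.ringChar_zmod_n]; lia), ZMod.card, show p / 2 = n by lia, sub_self]
    have sq_error : (u ^ n - ε) ^ 2 = 0 :=
      (sq _).trans (mul_eq_zero_of_redModSq_eq_zero euler euler)
    have ε_sq : ε ^ 2 = 1 := by
      rw [hε, ← Int.cast_pow, quadraticChar_sq_one hu, Int.cast_one]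
    rw [mul_comm 3 n, pow_mul]
    linear_combination (u ^ n + 2 * ε) * sq_error + (3 * u ^ n - 2 * ε) * ε_sq

theorem jacobiSum_teichmullerModSq_pow_quadraticCharTo {m : ℕ} (hm : p = 4 * m + 1) :
    jacobiSum (teichmullerModSq p ^ (3 * m)) (quadraticCharTo (ZMod p) (ZMod (p ^ 2))) =
      -centralDelannoy (2 * m) := by
  have hm0 : 0 < m := by have := (Fact.out : p.Prime).two_le; lia
  have term (t : ZMod p) : 2 * ((teichmullerModSq p ^ (3 * m)) t *
        quadraticCharTo (ZMod p) (ZMod (p ^ 2)) (1 - t)) =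
      3 * (teichmullerModSq p t ^ (3 * m) * (1 - teichmullerModSq p t) ^ (2 * m)) -
        teichmullerModSq p t ^ (3 * m) * (1 - teichmullerModSq p t) ^ (6 * m) := by
    have lift := two_mul_quadraticChar_redModSq (by lia : p = 2 * (2 * m) + 1) (by lia)
      (1 - teichmullerModSq p t)
    rw [map_sub, map_one, redModSq_teichmullerModSq, show 3 * (2 * m) = 6 * m by ring] at lift
    rw [MulChar.pow_apply' _ (by lia), quadraticCharTo_apply]
    linear_combination teichmullerModSq p t ^ (3 * m) * lift
  have two_mul_jacobiSum : 2 * jacobiSum (teichmullerModSq p ^ (3 * m))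
      (quadraticCharTo (ZMod p) (ZMod (p ^ 2))) =
      3 * ((p - 1) * ((-1) ^ m * (2 * m).choose m)) -
        (p - 1) * ((-1) ^ m * (2 * (6 * m).choose m)) := by
    rw [jacobiSum, mul_sum, sum_congr rfl fun t _ => term t, sum_sub_distrib, ← mul_sum,
      sum_teichmullerModSq_pow_mul_one_sub_pow_two_mul hm,
      sum_teichmullerModSq_pow_mul_one_sub_pow_six_mul hm]
  have unit_two : IsUnit ((2 : ℕ) : ZMod (p ^ 2)) :=
    isUnit_natCast_of_coprime (Nat.coprime_two_left.2 ⟨2 * m, by lia⟩)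
  apply unit_two.mul_left_cancel
  rw [Nat.cast_ofNat, two_mul_jacobiSum]
  linear_combination two_mul_centralDelannoy hm
    - (p - 1) * (-1) ^ m * two_mul_choose_six_mul hm
    - 3 * (-1) ^ m * natCast_mul_choose_six_mul_add_one hm
    + 2 * (-1) ^ m * ((6 * m + 1).choose m : ZMod (p ^ 2)) * natCast_self_sq p

end Teichmuller

section GaussianJacobiSums

variable {F : Type*} [Field F] [Fintype F]

theorem norm_jacobiSum_gaussianInt {χ ψ : MulChar F GaussianInt} (hχ : χ ≠ 1) (hψ : ψ ≠ 1)
    (hχψ : χ * ψ ≠ 1) : (jacobiSum χ ψ).norm = Fintype.card F := by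
  set c := GaussianInt.toComplex
  have hne {θ : MulChar F GaussianInt} (hθ : θ ≠ 1) : θ.ringHomComp c ≠ 1 :=
    (MulChar.ringHomComp_ne_one_iff GaussianInt.toComplex_injective).2 hθ
  have char_ne : ringChar ℂ ≠ ringChar F := by
    rw [ringChar.eq_zero]
    exact (CharP.char_ne_zero_of_finite F (ringChar F)).symm
  have conj : jacobiSum (χ.ringHomComp c)⁻¹ (ψ.ringHomComp c)⁻¹ =
      (starRingEnd ℂ) (jacobiSum (χ.ringHomComp c) (ψ.ringHomComp c)) := by
    rw [← MulChar.star_eq_inv, ← MulChar.star_eq_inv, ← jacobiSum_ringHomComp]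
    rfl
  have mul_conj := jacobiSum_mul_jacobiSum_inv char_ne (hne hχ) (hne hψ)
    (by rw [← MulChar.ringHomComp_mul]; exact hne hχψ)
  rw [conj, jacobiSum_ringHomComp, Complex.mul_conj, ← GaussianInt.intCast_complex_norm] at mul_conj
  exact_mod_cast mul_conj

theorem mul_dvd_jacobiSum_add_card {R : Type*} [CommRing R] [IsDomain R] {χ ψ : MulChar F R}
    (hχ : χ ≠ 1) (hψ : ψ ≠ 1) {a b : R} (ha : ∀ t ≠ 0, a ∣ 1 - χ t) (hb : ∀ t ≠ 0, b ∣ 1 - ψ t) :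
    a * b ∣ jacobiSum χ ψ + Fintype.card F := by
  have sum_eq : ∑ t, (1 - χ t) * (1 - ψ (1 - t)) = jacobiSum χ ψ + Fintype.card F := by
    have sum_ψ : ∑ t, ψ (1 - t) = 0 :=
      (Equiv.sum_comp (Equiv.subLeft 1) ψ).trans (MulChar.sum_eq_zero_of_ne_one hψ)
    simp only [sub_mul, mul_sub, one_mul, mul_one, sum_sub_distrib, sum_ψ,
      MulChar.sum_eq_zero_of_ne_one hχ, jacobiSum, sum_const, card_univ, nsmul_one]
    ring
  rw [← sum_eq]
  refine dvd_sum fun t _ => ?_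
  by_cases ht0 : t = 0
  · simp [ht0]
  by_cases ht1 : t = 1
  · simp [ht1]
  exact mul_dvd_mul (ha t ht0) (hb _ (sub_ne_zero.2 (Ne.symm ht1)))

theorem one_add_i_dvd_one_sub_of_isUnit {u : GaussianInt} (hu : IsUnit u) :
    (⟨1, 1⟩ : GaussianInt) ∣ 1 - u := by
  have norm_eq := (Zsqrtd.norm_eq_one_iff' (by norm_num) u).2 hu
  obtain ⟨c, hc⟩ : Even (1 - u.re - u.im) := by
    have := congr_arg Even norm_eq
    rw [Zsqrtd.norm_def] at this
    simp only [parity_simps, Int.not_even_one] at this ⊢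
    grind
  refine ⟨⟨c, c + u.re - 1⟩, Zsqrtd.ext ?_ ?_⟩
  · simp only [Zsqrtd.re_sub, Zsqrtd.re_one, Zsqrtd.re_mul]
    lia
  · simp only [Zsqrtd.im_sub, Zsqrtd.im_one, Zsqrtd.im_mul]
    lia

theorem two_mul_one_add_i_dvd_jacobiSum_quadraticCharTo_add_card [DecidableEq F]
    (hF : ringChar F ≠ 2) {χ : MulChar F GaussianInt} (hχ : χ ≠ 1) :
    ⟨1, 1⟩ * 2 ∣ jacobiSum χ (quadraticCharTo F GaussianInt) + Fintype.card F := by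
  refine mul_dvd_jacobiSum_add_card hχ (quadraticCharTo_ne_one F hF)
    (fun t ht => one_add_i_dvd_one_sub_of_isUnit (ht.isUnit.map χ)) fun t ht => ?_
  rcases quadraticChar_dichotomy ht with h | h <;> norm_num [h]

theorem re_modEq_of_dvd_add_norm {z : GaussianInt} {m : ℤ} (hz : z.norm = 4 * m + 1)
    (hdvd : ⟨1, 1⟩ * 2 ∣ z + z.norm) : z.re ≡ 2 * m - 1 [ZMOD 4] := by
  obtain ⟨w, hw⟩ := hdvd
  rw [hz] at hw
  have re_eq : z.re = 2 * (w.re - w.im) - (4 * m + 1) := by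
    have := congr_arg Zsqrtd.re hw
    simp only [Zsqrtd.re_add, Zsqrtd.re_intCast, Zsqrtd.re_mul, Zsqrtd.im_mul, Zsqrtd.re_ofNat,
      Zsqrtd.im_ofNat, Nat.cast_ofNat] at this
    linear_combination this
  have im_eq : z.im = 2 * (w.re + w.im) := by
    have := congr_arg Zsqrtd.im hw
    simp only [Zsqrtd.im_add, Zsqrtd.im_intCast, Zsqrtd.re_mul, Zsqrtd.im_mul, Zsqrtd.re_ofNat,
      Zsqrtd.im_ofNat, Nat.cast_ofNat] at this
    linear_combination this
  rw [Zsqrtd.norm_def, re_eq, im_eq] at hz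
  rw [re_eq]
  refine Int.modEq_iff_dvd.2 ⟨m - ((w.re - w.im) ^ 2 + 2 * (w.re - w.im) * w.im + 2 * w.im ^ 2
    - 2 * (w.re - w.im) * m + 2 * m ^ 2), ?_⟩
  linarith only [hz]

theorem sq_sub_two_mul_re_mul_add_norm (z : GaussianInt) :
    z ^ 2 - (2 * z.re : ℤ) * z + z.norm = 0 := by
  have add_star : z + star z = (2 * z.re : ℤ) := by
    ext <;> simp [two_mul]
  rw [← add_star, Zsqrtd.norm_eq_mul_conj]
  ring

end GaussianJacobiSums

section QuarticCharacter

variable {p : ℕ} [Fact p.Prime]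

theorem pow_eq_neg_one_of_forall_mem_zpowers {n : ℕ} (hn : p = 2 * n + 1) {g : (ZMod p)ˣ}
    (hg : ∀ u, u ∈ Subgroup.zpowers g) : (g : ZMod p) ^ n = -1 := by
  have order : orderOf (g : ZMod p) = n * 2 := by
    rw [orderOf_units, orderOf_eq_card_of_forall_mem_zpowers hg, Nat.card_eq_fintype_card,
      ZMod.card_units]
    lia
  have n_pos : 0 < n * 2 := by have := (Fact.out : p.Prime).two_le; lia
  exact ((order ▸ IsPrimitiveRoot.orderOf (g : ZMod p)).pow n_pos rfl).eq_neg_one_of_two_right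

/-- `χ` sends a generator `g` of `(ℤ/p)ˣ` to `i`, and `φ` sends `i` to the square root
`teichmullerModSq p g ^ (3 * m)` of `-1`. -/
theorem exists_mulChar_gaussianInt_ringHomComp_eq {m : ℕ} (hm : p = 4 * m + 1) :
    ∃ (χ : MulChar (ZMod p) GaussianInt) (φ : GaussianInt →+* ZMod (p ^ 2)),
      χ ^ 2 ≠ 1 ∧ χ.ringHomComp φ = teichmullerModSq p ^ (3 * m) := by
  obtain ⟨g, hg⟩ := IsCyclic.exists_generator (α := (ZMod p)ˣ)
  have g_pow : (g : ZMod p) ^ (2 * m) = -1 :=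
    pow_eq_neg_one_of_forall_mem_zpowers (by lia) hg
  set ι : ZMod (p ^ 2) := (teichmullerModSq p ^ (3 * m)) g with hι
  have ι_sq : ι * ι = ((-1 : ℤ) : ZMod (p ^ 2)) := by
    rw [hι, ← MulChar.mul_apply, ← pow_add, MulChar.pow_apply_coe, ← map_pow,
      show 3 * m + 3 * m = 2 * m * 3 by ring, pow_mul, g_pow]
    norm_num [teichmullerModSq_neg_one (⟨2 * m, by lia⟩ : Odd p)]
  let i : GaussianIntˣ := Units.mkOfMulEqOne ⟨0, 1⟩ ⟨0, -1⟩ (by decide)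
  have hi : i ∈ rootsOfUnity (Fintype.card (ZMod p)ˣ) GaussianInt := by
    rw [mem_rootsOfUnity, ZMod.card_units, show p - 1 = 4 * m by lia, pow_mul,
      show i ^ 4 = 1 from Units.ext (by decide), one_pow]
  let χ := MulChar.ofRootOfUnity hi hg
  have χ_g : χ g = ⟨0, 1⟩ := MulChar.ofRootOfUnity_spec hi hg
  let φ : GaussianInt →+* ZMod (p ^ 2) := Zsqrtd.lift ⟨ι, ι_sq⟩
  refine ⟨χ, φ, fun h => ?_, (MulChar.eq_iff hg _ _).2 ?_⟩
  · have := DFunLike.congr_fun h (g : ZMod p)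
    rw [MulChar.pow_apply_coe, χ_g, MulChar.one_apply_coe] at this
    exact absurd this (by decide)
  · rw [MulChar.ringHomComp_apply, χ_g]
    simp [φ, hι]

theorem exists_gaussianInt_norm_eq {m : ℕ} (hm : p = 4 * m + 1) :
    ∃ (φ : GaussianInt →+* ZMod (p ^ 2)) (z : GaussianInt),
      z.norm = p ∧ z.re ≡ 2 * (m : ℤ) - 1 [ZMOD 4] ∧
        φ z = -(centralDelannoy (2 * m) : ZMod (p ^ 2)) := by
  obtain ⟨χ, φ, χ_sq, χ_comp⟩ := exists_mulChar_gaussianInt_ringHomComp_eq hm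
  set ρ := quadraticCharTo (ZMod p) GaussianInt
  have char_ne : ringChar (ZMod p) ≠ 2 := by rw [ZMod.ringChar_zmod_n]; lia
  have χ_ne : χ ≠ 1 := fun h => χ_sq (by rw [h, one_pow])
  have ρ_ne : ρ ≠ 1 := quadraticCharTo_ne_one _ char_ne
  have ρ_sq : ρ ^ 2 = 1 := quadraticCharTo_sq _
  have χρ_ne : χ * ρ ≠ 1 := fun h => χ_sq <| calc
    χ ^ 2 = (χ * ρ) ^ 2 := by rw [mul_pow, ρ_sq, mul_one]
    _ = 1 := by rw [h, one_pow]
  have norm_eq : (jacobiSum χ ρ).norm = p := by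
    rw [norm_jacobiSum_gaussianInt χ_ne ρ_ne χρ_ne, ZMod.card]
  refine ⟨φ, jacobiSum χ ρ, norm_eq, re_modEq_of_dvd_add_norm ?_ ?_, ?_⟩
  · rw [norm_eq, hm]
    push_cast
    ring
  · rw [norm_eq]
    simpa [ZMod.card] using two_mul_one_add_i_dvd_jacobiSum_quadraticCharTo_add_card char_ne χ_ne
  · rw [← jacobiSum_ringHomComp, χ_comp, ringHomComp_quadraticCharTo,
      jacobiSum_teichmullerModSq_pow_quadraticCharTo hm]

end QuarticCharacter

section SumsOfTwoSquares

theorem sq_eq_or_sq_eq_of_dvd_mul_sub_mul {n a b x y : ℤ} (hn : n ≠ 0) (hab : n = a ^ 2 + b ^ 2)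
    (hxy : n = x ^ 2 + y ^ 2) (hdvd : n ∣ x * b - a * y) : x ^ 2 = a ^ 2 ∨ x ^ 2 = b ^ 2 := by
  have brahmagupta : n ^ 2 = (x * a + y * b) ^ 2 + (x * b - a * y) ^ 2 := by
    rw [sq n]
    nth_rw 1 [hab]
    rw [hxy]
    ring
  by_cases hzero : x * b - a * y = 0
  · left
    apply mul_left_cancel₀ hn
    linear_combination x ^ 2 * hab - a ^ 2 * hxy + (x * b + a * y) * hzero
  · right
    have n_sq_le : n ^ 2 ≤ (x * b - a * y) ^ 2 :=
      Int.le_of_dvd (by positivity) (pow_dvd_pow_of_dvd hdvd 2)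
    have zero : x * a + y * b = 0 := by
      rw [← sq_nonpos_iff]
      linarith
    apply mul_left_cancel₀ hn
    linear_combination x ^ 2 * hab - b ^ 2 * hxy + (x * a - y * b) * zero

theorem sq_eq_or_sq_eq_of_prime_eq_sq_add_sq {p a b x y : ℤ} (hp : Prime p)
    (hab : p = a ^ 2 + b ^ 2) (hxy : p = x ^ 2 + y ^ 2) : x ^ 2 = a ^ 2 ∨ x ^ 2 = b ^ 2 := by
  have hdvd : p ∣ (x * b - a * y) * (x * b - a * -y) :=
    ⟨x ^ 2 - a ^ 2, by linear_combination a ^ 2 * hxy - x ^ 2 * hab⟩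
  rcases hp.dvd_or_dvd hdvd with h | h
  · exact sq_eq_or_sq_eq_of_dvd_mul_sub_mul hp.ne_zero hab hxy h
  · exact sq_eq_or_sq_eq_of_dvd_mul_sub_mul hp.ne_zero hab (by rwa [neg_sq]) h

theorem eq_neg_neg_one_pow_mul_of_eq_sq_add_sq {m : ℕ} {a b x y : ℤ}
    (hp : Prime (4 * m + 1 : ℤ)) (hab : 4 * m + 1 = a ^ 2 + b ^ 2) (ha : a ≡ 1 [ZMOD 4])
    (hxy : 4 * m + 1 = x ^ 2 + y ^ 2) (hx : x ≡ 2 * m - 1 [ZMOD 4]) : x = -((-1) ^ m * a) := by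
  have odd_a : Odd a := by grind [Int.ModEq]
  have odd_x : Odd x := by grind [Int.ModEq]
  have even_b : Even b := by
    have := congr_arg Even hab
    simp only [parity_simps, Int.even_pow, eq_iff_iff] at this
    grind
  have x_sq : x ^ 2 = a ^ 2 := by
    refine (sq_eq_or_sq_eq_of_prime_eq_sq_add_sq hp hab hxy).resolve_right fun h => ?_
    exact Int.not_even_iff_odd.2 (odd_x.pow (n := 2)) (h ▸ even_b.pow_of_ne_zero two_ne_zero)
  rcases sq_eq_sq_iff_eq_or_eq_neg.1 x_sq with rfl | rfl <;>
    rcases m.even_or_odd with hm | hm <;> rw [hm.neg_one_pow] <;> grind [Int.ModEq]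

end SumsOfTwoSquares

section CentralDelannoyCongruence

variable {p : ℕ} [Fact p.Prime] {m : ℕ}

theorem not_dvd_choose_of_lt {p n k : ℕ} (hp : p.Prime) (hn : n < p) (hk : k ≤ n) :
    ¬ p ∣ n.choose k := by
  intro h
  have hdvd : p ∣ n.factorial := by
    rw [← Nat.choose_mul_factorial_mul_factorial hk, mul_assoc]
    exact h.mul_right _
  exact (hp.dvd_factorial.1 hdvd).not_gt hn

theorem redModSq_centralDelannoy_ne_zero (hm : p = 4 * m + 1) :
    redModSq p (centralDelannoy (2 * m)) ≠ 0 := by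
  have choose_ne : ((2 * m).choose m : ZMod p) ≠ 0 := by
    rw [Ne, ZMod.natCast_eq_zero_iff]
    exact not_dvd_choose_of_lt Fact.out (by lia) (by lia)
  have two_ne : (2 : ZMod p) ≠ 0 := Ring.two_ne_zero (by rw [ZMod.ringChar_zmod_n]; lia)
  have sign_ne : (-1 : ZMod p) ^ m ≠ 0 := pow_ne_zero _ (neg_ne_zero.2 one_ne_zero)
  refine right_ne_zero_of_mul (a := 2) ?_
  rw [← map_ofNat (redModSq p) 2, ← map_mul, two_mul_centralDelannoy hm]
  simp only [map_mul, map_sub, map_pow, map_neg, map_one, map_ofNat, map_natCast,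
    natCast_choose_six_mul_add_one hm]
  convert mul_ne_zero sign_ne (mul_ne_zero two_ne choose_ne) using 1
  ring

/-- `D` is a root modulo `p ^ 2` of `X ^ 2 - 2 (-1) ^ m a X + p`, hence is congruent modulo `p` to
the root sum `2 (-1) ^ m a`; squaring that congruence eliminates `D ^ 2`. -/
theorem two_mul_mul_centralDelannoy {a b : ℤ} (hm : p = 4 * m + 1) (hab : (p : ℤ) = a ^ 2 + b ^ 2)
    (ha : a ≡ 1 [ZMOD 4]) :
    (2 * a * centralDelannoy (2 * m) : ZMod (p ^ 2)) = (-1) ^ m * (4 * a ^ 2 - p) := by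
  obtain ⟨φ, z, norm_z, re_z, φ_z⟩ := exists_gaussianInt_norm_eq hm
  set D : ZMod (p ^ 2) := (centralDelannoy (2 * m) : ZMod (p ^ 2))
  have cast_p : (p : ℤ) = 4 * m + 1 := by exact_mod_cast hm
  have re_eq : z.re = -((-1) ^ m * a) := by
    refine eq_neg_neg_one_pow_mul_of_eq_sq_add_sq (b := b) (y := z.im) ?_ ?_ ha ?_ re_z
    · exact cast_p ▸ Nat.prime_iff_prime_int.1 Fact.out
    · rw [← cast_p, hab]
    · rw [← cast_p, ← norm_z, Zsqrtd.norm_def]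
      ring
  have sign_sq : ((-1 : ZMod (p ^ 2)) ^ m) ^ 2 = 1 := by
    rw [← pow_mul, mul_comm, pow_mul, neg_one_sq, one_pow]
  have quadratic : D ^ 2 - 2 * (-1) ^ m * a * D + p = 0 := by
    have := congr_arg φ (sq_sub_two_mul_re_mul_add_norm z)
    rw [norm_z, re_eq] at this
    simp only [map_add, map_sub, map_mul, map_pow, map_intCast, map_zero, φ_z] at this
    push_cast at this
    linear_combination this
  have red_eq : redModSq p (D - 2 * (-1) ^ m * a) = 0 := by
    have product : redModSq p D * redModSq p (D - 2 * (-1) ^ m * a) = 0 := calc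
      _ = redModSq p (-p) := by
        rw [← map_mul]
        exact congr_arg _ (by linear_combination quadratic)
      _ = 0 := by rw [map_neg, map_natCast, ZMod.natCast_self, neg_zero]
    exact (mul_eq_zero_iff_left (redModSq_centralDelannoy_ne_zero hm)).1 product
  have square : (D - 2 * (-1) ^ m * a) ^ 2 = 0 :=
    (sq _).trans (mul_eq_zero_of_redModSq_eq_zero red_eq red_eq)
  linear_combination (-1) ^ m * (quadratic - square) + (4 * (-1) ^ m * a ^ 2 - 2 * a * D) * sign_sq

end CentralDelannoyCongruence

namespace ratCongr

variable {p k : ℕ} {x y z w : ℚ}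

theorem refl (hp : p ≠ 1) (x : ℚ) : ratCongr p k x x :=
  ⟨0, by simp, by simpa using hp⟩

theorem symm (h : ratCongr p k x y) : ratCongr p k y x := by
  obtain ⟨c, hc, hden⟩ := h
  exact ⟨-c, by linear_combination -hc, by rwa [Rat.neg_den]⟩

theorem add (hp : p.Prime) (hxy : ratCongr p k x y) (hzw : ratCongr p k z w) :
    ratCongr p k (x + z) (y + w) := by
  obtain ⟨c, hc, hcden⟩ := hxy
  obtain ⟨d, hd, hdden⟩ := hzw
  refine ⟨c + d, by linear_combination hc + hd, fun h => ?_⟩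
  exact (hp.dvd_mul.1 (h.trans (Rat.add_den_dvd c d))).elim hcden hdden

theorem trans (hp : p.Prime) (hxy : ratCongr p k x y) (hyz : ratCongr p k y z) :
    ratCongr p k x z := by
  obtain ⟨c, hc, hden⟩ := add hp hxy hyz
  exact ⟨c, by linear_combination hc, hden⟩

theorem sum (hp : p.Prime) {ι : Type*} {s : Finset ι} {f g : ι → ℚ}
    (h : ∀ i ∈ s, ratCongr p k (f i) (g i)) : ratCongr p k (∑ i ∈ s, f i) (∑ i ∈ s, g i) := by
  classical
  induction s using Finset.induction_on with
  | empty => exact refl hp.ne_one _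
  | insert i s hi ih =>
    rw [sum_insert hi, sum_insert hi]
    exact add hp (h i (mem_insert_self i s)) (ih fun j hj => h j (mem_insert_of_mem hj))

theorem div_of_zmod_eq_mul {a b N : ℤ} (hN : ¬ (p : ℤ) ∣ N)
    (h : (a : ZMod (p ^ k)) = N * b) : ratCongr p k (a / N) b := by
  have N_ne : (N : ℚ) ≠ 0 := by
    rintro hzero
    exact hN (by simp [Int.cast_eq_zero.1 hzero])
  obtain ⟨c, hc⟩ : ((p ^ k : ℕ) : ℤ) ∣ a - N * b := by
    rw [← ZMod.intCast_zmod_eq_zero_iff_dvd]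
    push_cast
    rw [h, sub_self]
  refine ⟨c / N, ?_, fun hdvd => ?_⟩
  · have := congr_arg (Int.cast (R := ℚ)) hc
    push_cast at this
    field_simp
    linear_combination this
  · have den_dvd := Rat.den_dvd c N
    rw [Rat.divInt_eq_div] at den_dvd
    exact hN ((Int.natCast_dvd_natCast.2 hdvd).trans den_dvd)

end ratCongr

theorem ratCongr_sum_centralBinom_sq_div_pow {p n : ℕ} [hp : Fact p.Prime] (hn : p = 2 * n + 1)
    {q r : ℤ} (hqr : q * r = -16) :
    ratCongr p 2 (∑ k ∈ range (n + 1), (k.centralBinom : ℚ) ^ 2 / (q : ℚ) ^ k)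
      ((∑ k ∈ range (n + 1), (n.choose k : ℤ) * (n + k).choose k * r ^ k : ℤ) : ℚ) := by
  have not_dvd (k : ℕ) : ¬ (p : ℤ) ∣ q ^ k := by
    intro h
    have p_int := Nat.prime_iff_prime_int.1 hp.out
    have two_pow : (p : ℤ) ∣ 2 ^ 4 := by
      simpa [hqr] using (p_int.dvd_of_dvd_pow h).mul_right r
    have := Int.le_of_dvd two_pos (p_int.dvd_of_dvd_pow two_pow)
    have := hp.out.two_le
    lia
  rw [Int.cast_sum]
  refine ratCongr.sum hp.out fun k hk => ?_
  have power : (q : ZMod (p ^ 2)) ^ k * (r : ZMod (p ^ 2)) ^ k = (-16) ^ k := by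
    rw [← mul_pow, ← Int.cast_mul, hqr]
    norm_num
  have congr := ratCongr.div_of_zmod_eq_mul (k := 2) (a := (k.centralBinom : ℤ) ^ 2)
    (b := (n.choose k : ℤ) * (n + k).choose k * r ^ k) (not_dvd k) (by
      have := centralBinom_sq_eq hn (Nat.lt_succ_iff.1 (mem_range.1 hk))
      push_cast
      linear_combination this - n.choose k * (n + k).choose k * power)
  simpa only [Int.cast_pow, Int.cast_natCast] using congr

theorem ratCongr_sum_centralBinom_sq_div_neg_sixteen_pow {p n : ℕ} [Fact p.Prime]
    (hn : p = 2 * n + 1) :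
    ratCongr p 2 (∑ k ∈ range (n + 1), (k.centralBinom : ℚ) ^ 2 / (-16) ^ k)
      (centralDelannoy n) := by
  simpa [centralDelannoy] using
    ratCongr_sum_centralBinom_sq_div_pow hn (by norm_num : (-16 : ℤ) * 1 = -16)

theorem ratCongr_sum_centralBinom_sq_div_eight_pow {p n : ℕ} [Fact p.Prime]
    (hn : p = 2 * n + 1) :
    ratCongr p 2 (∑ k ∈ range (n + 1), (k.centralBinom : ℚ) ^ 2 / 8 ^ k)
      ((-1) ^ n * centralDelannoy n) := by
  have := ratCongr_sum_centralBinom_sq_div_pow hn (by norm_num : (8 : ℤ) * -2 = -16)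
  rw [sum_choose_mul_choose_mul_neg_two_pow] at this
  push_cast at this
  exact this

theorem ratCongr_two_mul_sub_div_two_mul {p m : ℕ} [hp : Fact p.Prime] (hm : p = 4 * m + 1)
    {a b : ℤ} (hab : (p : ℤ) = a ^ 2 + b ^ 2) (ha : a ≡ 1 [ZMOD 4]) :
    ratCongr p 2 ((-1) ^ m * (2 * a - p / (2 * a))) (centralDelannoy (2 * m)) := by
  have a_ne : a ≠ 0 := by rintro rfl; exact absurd ha (by decide)
  have not_dvd : ¬ (p : ℤ) ∣ 2 * a := by
    intro h
    have two_le : (2 : ℤ) ≤ p := by exact_mod_cast hp.out.two_le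
    rcases (Nat.prime_iff_prime_int.1 hp.out).dvd_or_dvd h with h | h
    · have := Int.le_of_dvd two_pos h
      lia
    · have := Int.le_of_dvd (by positivity) (pow_dvd_pow_of_dvd h 2)
      nlinarith only [this, hab, two_le, sq_nonneg b]
  have congr := ratCongr.div_of_zmod_eq_mul (k := 2) (a := (-1) ^ m * (4 * a ^ 2 - p))
    (b := centralDelannoy (2 * m)) not_dvd
    (by push_cast; exact (two_mul_mul_centralDelannoy hm hab ha).symm)
  convert congr using 1
  · have : (a : ℚ) ≠ 0 := Int.cast_ne_zero.2 a_ne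
    push_cast
    field_simp
    ring
  · norm_cast

theorem stmt18 (p : ℕ) (hp : p.Prime) (hp4 : p % 4 = 1) (a b : ℤ)
    (hab : (p : ℤ) = a ^ 2 + b ^ 2) (ha : a % 4 = 1) :
    ratCongr p 2
      (∑ k ∈ Finset.range ((p - 1) / 2 + 1), ((2 * k).choose k : ℚ) ^ 2 / 8 ^ k)
      (∑ k ∈ Finset.range ((p - 1) / 2 + 1), ((2 * k).choose k : ℚ) ^ 2 / (-16 : ℚ) ^ k) ∧
    ratCongr p 2
      (∑ k ∈ Finset.range ((p - 1) / 2 + 1), ((2 * k).choose k : ℚ) ^ 2 / (-16 : ℚ) ^ k)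
      ((-1 : ℚ) ^ ((p - 1) / 4) * (2 * (a : ℚ) - (p : ℚ) / (2 * (a : ℚ)))) := by
  have : Fact p.Prime := ⟨hp⟩
  obtain ⟨m, hm⟩ : ∃ m, p = 4 * m + 1 := ⟨p / 4, by lia⟩
  have hn : p = 2 * (2 * m) + 1 := by lia
  have sum_eight := ratCongr_sum_centralBinom_sq_div_eight_pow hn
  rw [(even_two_mul m).neg_one_pow, one_mul] at sum_eight
  have sum_neg_sixteen := ratCongr_sum_centralBinom_sq_div_neg_sixteen_pow hn
  have closed_form := ratCongr_two_mul_sub_div_two_mul hm hab ha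
  rw [show (p - 1) / 2 = 2 * m by lia, show (p - 1) / 4 = m by lia]
  simp only [← Nat.centralBinom_eq_two_mul_choose]
  exact ⟨sum_eight.trans hp sum_neg_sixteen.symm, sum_neg_sixteen.trans hp closed_form.symm⟩
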